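/- arXiv:1208.2455 — 3 statements merged into one kernel-verified Lean document; each statement's English description precedes it below -/
import Mathlib

section
/- Let c > 0 and m be real numbers with m > √c, and let a, b > 0 satisfy √c·(coth(√c·a) + coth(√c·b)) = 2m. Then a + b ≥ (2/√c)·artanh(√c/m). -/
open Real

/-- The real hyperbolic cotangent. -/
noncomputable def Real.coth (x : ℝ) : ℝ := Real.cosh x / Real.sinh x

/-- The real inverse hyperbolic tangent. -/
noncomputable def Real.arctanh (x : ℝ) : ℝ := Real.log ((1 + x) / (1 - x)) / 2

/-!
The midpoint inequality for `coth` on `(0, ∞)` bounds `coth (√c (a + b) / 2)` by `m / √c`,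
the average of the two hyperbolic cotangents in the mirror equation. Taking reciprocals,
`√c / m ≤ tanh (√c (a + b) / 2)`, and `artanh` is increasing.

The midpoint inequality itself holds because `coth x + coth y = sinh (x + y) / (sinh x * sinh y)`:
for a fixed sum `x + y`, the denominator is largest at `x = y`.
-/

theorem sinh_add_mul_sinh_sub (u v : ℝ) :
    sinh (u + v) * sinh (u - v) = sinh u ^ 2 - sinh v ^ 2 := by
  rw [sinh_add, sinh_sub]
  linear_combination sinh u ^ 2 * cosh_sq v - sinh v ^ 2 * cosh_sq u

theorem sinh_mul_sinh_le_sinh_midpoint_sq (x y : ℝ) :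
    sinh x * sinh y ≤ sinh ((x + y) / 2) ^ 2 := by
  have h := sinh_add_mul_sinh_sub ((x + y) / 2) ((x - y) / 2)
  rw [show (x + y) / 2 + (x - y) / 2 = x by ring, show (x + y) / 2 - (x - y) / 2 = y by ring] at h
  exact h.trans_le (sub_le_self _ (sq_nonneg _))

theorem coth_add_coth {x y : ℝ} (hx : x ≠ 0) (hy : y ≠ 0) :
    Real.coth x + Real.coth y = sinh (x + y) / (sinh x * sinh y) := by
  rw [Real.coth, Real.coth, div_add_div _ _ (sinh_ne_zero.mpr hx) (sinh_ne_zero.mpr hy),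
    sinh_add, add_comm]

theorem coth_midpoint_le {x y : ℝ} (hx : 0 < x) (hy : 0 < y) :
    Real.coth ((x + y) / 2) ≤ (Real.coth x + Real.coth y) / 2 := by
  set u := (x + y) / 2 with hu
  have hxy : x + y = 2 * u := by rw [hu]; ring
  have hu_pos : 0 < sinh u := sinh_pos_iff.mpr (half_pos (add_pos hx hy))
  have hprod_pos : 0 < sinh x * sinh y := mul_pos (sinh_pos_iff.mpr hx) (sinh_pos_iff.mpr hy)
  calc Real.coth u
      = sinh u * cosh u / sinh u ^ 2 := by rw [Real.coth]; field_simp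
    _ ≤ sinh u * cosh u / (sinh x * sinh y) := by
        have hnum : 0 ≤ sinh u * cosh u := (mul_pos hu_pos (cosh_pos u)).le
        exact div_le_div_of_nonneg_left hnum hprod_pos (sinh_mul_sinh_le_sinh_midpoint_sq x y)
    _ = sinh (x + y) / (sinh x * sinh y) / 2 := by
        rw [hxy, sinh_two_mul]
        ring
    _ = (Real.coth x + Real.coth y) / 2 := by rw [coth_add_coth hx.ne' hy.ne']

theorem coth_pos {x : ℝ} (hx : 0 < x) : 0 < Real.coth x :=
  div_pos (cosh_pos x) (sinh_pos_iff.mpr hx)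

theorem inv_coth (x : ℝ) : (Real.coth x)⁻¹ = tanh x := by
  rw [Real.coth, inv_div, tanh_eq_sinh_div_cosh]

theorem arctanh_eq_artanh {x : ℝ} (hx : x ∈ Set.Icc (-1) 1) : Real.arctanh x = artanh x := by
  rw [Real.arctanh, artanh_eq_half_log hx, one_div_mul_eq_div]

theorem arctanh_inv_le_of_coth_le {x t : ℝ} (hx : 0 < x) (h : Real.coth x ≤ t) :
    Real.arctanh t⁻¹ ≤ x := by
  have ht_inv_pos : 0 < t⁻¹ := inv_pos.mpr ((coth_pos hx).trans_le h)
  have ht_inv_le : t⁻¹ ≤ tanh x := inv_coth x ▸ inv_anti₀ (coth_pos hx) h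
  have ht_inv_mem : t⁻¹ ∈ Set.Icc (-1) 1 :=
    ⟨by linarith, ht_inv_le.trans (tanh_lt_one x).le⟩
  calc Real.arctanh t⁻¹ = artanh t⁻¹ := arctanh_eq_artanh ht_inv_mem
    _ ≤ artanh (tanh x) := artanh_le_artanh (by linarith) (tanh_lt_one x) ht_inv_le
    _ = x := artanh_tanh x

/-- Inverted form of the coth midpoint inequality: if `c > 0`, `m > √c`,
`a, b > 0` and `√c·(coth(√c·a) + coth(√c·b)) = 2m`, then
`a + b ≥ (2/√c)·artanh(√c/m)`. -/
theorem sum_ge_of_coth_mirror (c m a b : ℝ)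
    (hc : 0 < c) (hm : Real.sqrt c < m) (ha : 0 < a) (hb : 0 < b)
    (hmirror : Real.sqrt c * (Real.coth (Real.sqrt c * a) + Real.coth (Real.sqrt c * b)) = 2 * m) :
    a + b ≥ (2 / Real.sqrt c) * Real.arctanh (Real.sqrt c / m) := by
  have hs : 0 < √c := sqrt_pos.mpr hc
  have hsa : 0 < √c * a := mul_pos hs ha
  have hsb : 0 < √c * b := mul_pos hs hb
  have hcoth : Real.coth ((√c * a + √c * b) / 2) ≤ m / √c :=
    calc Real.coth ((√c * a + √c * b) / 2)
        ≤ (Real.coth (√c * a) + Real.coth (√c * b)) / 2 := coth_midpoint_le hsa hsb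
      _ = m / √c := by
          rw [div_eq_div_iff two_ne_zero hs.ne']
          linarith
  have harctanh : Real.arctanh (√c / m) ≤ (√c * a + √c * b) / 2 :=
    inv_div m √c ▸ arctanh_inv_le_of_coth_le (half_pos (add_pos hsa hsb)) hcoth
  calc 2 / √c * Real.arctanh (√c / m)
      ≤ 2 / √c * ((√c * a + √c * b) / 2) := by gcongr
    _ = a + b := by field_simp
end

section
/- For all real numbers β ∈ (0,1) and k > 1, the integral ∫₀^π (2/√(1−β²))·artanh( √(1−β²)·sin φ / (k − β·cos φ) )·sin φ dφ equals 2π(k − √(k²−1)). In particular, this integral is independent of β. (Note that the artanh is well defined since √(1−β²)·sin φ < k − β·cos φ for all φ ∈ (0,π) when k > 1.) -/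
open Real intervalIntegral

/-- The real inverse hyperbolic tangent. -/
noncomputable def Real.artanhLog (x : ℝ) : ℝ := Real.log ((1 + x) / (1 - x)) / 2

/-!
With `β = cos α`, the addition formula for `artanh` turns the integrand into a difference of the
two translates of `φ ↦ log (k - cos φ)` by `±α`. Evenness and periodicity unfold the integral over
`[0, π]` into one over a full period, which is `-sin α` times the first Fourier cosine
coefficient of `log (k - cos φ)`. The factor `sin α = √(1 - β²)` cancels, so `β` disappears, and
integrating that coefficient by parts reduces it to the Poisson integral of the constant `1`.
-/

open Function
open MeasureTheory (volume)

section IntervalIntegral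

theorem integral_neg_self_eq_zero_of_odd {E : Type*} [NormedAddCommGroup E] [NormedSpace ℝ E]
    {f : ℝ → E} (hf : f.Odd) (a : ℝ) : ∫ x in -a..a, f x = 0 := by
  have : IsAddTorsionFree E := .of_isTorsionFree ℝ E
  have h : ∫ x in -a..a, f x = -∫ x in -a..a, f x := by
    simpa only [hf _, intervalIntegral.integral_neg, neg_neg, neg_eq_iff_eq_neg] using
      integral_comp_neg (a := -a) (b := a) f
  exact self_eq_neg.mp h

variable {f g : ℝ → ℝ}

theorem integral_translate_sub_translate_mul (hf : f.Even) (hg : g.Odd)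
    (hf_int : ∀ a b, IntervalIntegrable f volume a b) (hg_cont : Continuous g) (α c : ℝ) :
    ∫ x in 0..c, (f (x + α) - f (x - α)) * g x = ∫ x in -c..c, f (x + α) * g x := by
  have hplus (a b : ℝ) : IntervalIntegrable (fun x ↦ f (x + α) * g x) volume a b := by
    have h := (hf_int (a + α) (b + α)).comp_add_right α
    simp only [add_sub_cancel_right] at h
    exact h.mul_continuousOn hg_cont.continuousOn
  have hminus : IntervalIntegrable (fun x ↦ f (x - α) * g x) volume 0 c := by
    have h := (hf_int (0 - α) (c - α)).comp_sub_right α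
    simp only [sub_add_cancel] at h
    exact h.mul_continuousOn hg_cont.continuousOn
  have hreflect : ∫ x in 0..c, f (x - α) * g x = -∫ x in -c..0, f (x + α) * g x := by
    rw [← neg_zero, ← integral_comp_neg, neg_zero, ← intervalIntegral.integral_neg]
    refine integral_congr fun x _ ↦ ?_
    simp only [hg x, mul_neg, neg_neg]
    rw [← hf (x - α), neg_sub, sub_eq_neg_add]
  simp_rw [sub_mul]
  rw [integral_sub (hplus 0 c) hminus, hreflect, sub_neg_eq_add, add_comm,
    integral_add_adjacent_intervals (hplus _ _) (hplus _ _)]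

theorem integral_translate_mul_sin_of_even (heven : f.Even) (hper : f.Periodic (2 * π))
    (hint : IntervalIntegrable f volume (-π) π) (α : ℝ) :
    ∫ φ in -π..π, f (φ + α) * sin φ = -sin α * ∫ φ in -π..π, f φ * cos φ := by
  have hodd : ∫ φ in -π..π, f φ * sin φ = 0 :=
    integral_neg_self_eq_zero_of_odd (fun φ ↦ by simp only [heven φ, sin_neg, mul_neg]) π
  have hper' : Periodic (fun φ ↦ f φ * sin (φ - α)) (2 * π) :=
    hper.mul (sin_periodic.sub_const α)
  calc ∫ φ in -π..π, f (φ + α) * sin φ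
      = ∫ φ in (-π + α)..(π + α), f φ * sin (φ - α) := by
        simpa only [add_sub_cancel_right] using
          integral_comp_add_right (a := -π) (b := π) (fun φ ↦ f φ * sin (φ - α)) α
    _ = ∫ φ in -π..π, f φ * sin (φ - α) := by
        convert hper'.intervalIntegral_add_eq (-π + α) (-π) using 2 <;> ring
    _ = ∫ φ in -π..π, (cos α * (f φ * sin φ) - sin α * (f φ * cos φ)) :=
        integral_congr fun φ _ ↦ by simp only [sin_sub]; ring
    _ = -sin α * ∫ φ in -π..π, f φ * cos φ := by
        rw [integral_sub ((hint.mul_continuousOn continuous_sin.continuousOn).const_mul _)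
            ((hint.mul_continuousOn continuous_cos.continuousOn).const_mul _),
          intervalIntegral.integral_const_mul, intervalIntegral.integral_const_mul, hodd]
        ring

end IntervalIntegral

theorem poissonKernel_zero_ofReal_circleMap (r R θ : ℝ) :
    poissonKernel 0 r (circleMap 0 R θ) =
      (R ^ 2 - r ^ 2) / (R ^ 2 - 2 * R * r * cos θ + r ^ 2) := by
  have hnorm : ‖circleMap 0 R θ - r‖ ^ 2 = R ^ 2 - 2 * R * r * cos θ + r ^ 2 := by
    rw [Complex.sq_norm, Complex.normSq_apply]
    simp only [Complex.sub_re, Complex.sub_im, circleMap_zero_re, circleMap_zero_im,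
      Complex.ofReal_re, Complex.ofReal_im]
    linear_combination R ^ 2 * sin_sq_add_cos_sq θ
  simp [poissonKernel_def, hnorm]

theorem circleAverage_poissonKernel {c w : ℂ} {R : ℝ} (hw : w ∈ Metric.ball c R) :
    circleAverage (poissonKernel c w) c R = 1 := by
  simpa only [← Pi.one_def, smul_eq_mul, mul_one, Pi.one_apply] using
    (InnerProductSpace.harmonicOnNhd_const (1 : ℝ)).circleAverage_poissonKernel_smul hw

theorem integral_poissonKernel_circleMap {r R : ℝ} (hr : |r| < R) :
    ∫ θ in 0..2 * π, (R ^ 2 - r ^ 2) / (R ^ 2 - 2 * R * r * cos θ + r ^ 2) = 2 * π := by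
  have h := circleAverage_poissonKernel (c := 0) (w := r) (R := R) (by simpa using hr)
  simp only [circleAverage_def, poissonKernel_zero_ofReal_circleMap, smul_eq_mul] at h
  rwa [inv_mul_eq_one₀ two_pi_pos.ne', eq_comm] at h

section LogSubCos

variable {k : ℝ}

theorem sub_cos_pos (hk : 1 < k) (θ : ℝ) : 0 < k - cos θ := by
  linarith [cos_le_one θ]

theorem continuous_log_sub_cos (hk : 1 < k) : Continuous fun θ ↦ log (k - cos θ) :=
  Continuous.log (by fun_prop) fun θ ↦ (sub_cos_pos hk θ).ne'

theorem integral_inv_sub_cos (hk : 1 < k) :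
    ∫ θ in -π..π, (k - cos θ)⁻¹ = 2 * π / √(k ^ 2 - 1) := by
  -- `r = k - w` is the root of `r ^ 2 - 2 * k * r + 1` in the unit disc, which makes
  -- `w / (k - cos θ)` the Poisson kernel of the unit disc at `r`.
  set w := √(k ^ 2 - 1)
  set r := k - w
  have hw_sq : w ^ 2 = k ^ 2 - 1 := sq_sqrt (by nlinarith)
  have hw_pos : 0 < w := sqrt_pos.mpr (by nlinarith)
  have hr_pos : 0 < r := by nlinarith
  have hr_lt_one : r < 1 := by nlinarith
  have hkernel (θ : ℝ) :
      (k - cos θ)⁻¹ = w⁻¹ * ((1 ^ 2 - r ^ 2) / (1 ^ 2 - 2 * 1 * r * cos θ + r ^ 2)) := by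
    have hnum : 1 ^ 2 - r ^ 2 = 2 * r * w := by linear_combination hw_sq
    have hden : 1 ^ 2 - 2 * 1 * r * cos θ + r ^ 2 = 2 * r * (k - cos θ) := by
      linear_combination hw_sq
    have hpos := sub_cos_pos hk θ
    rw [hnum, hden]
    field_simp
  have hper : Periodic (fun θ ↦ (k - cos θ)⁻¹) (2 * π) := fun θ ↦ by simp only [cos_add_two_pi]
  calc ∫ θ in -π..π, (k - cos θ)⁻¹
      = ∫ θ in 0..2 * π, (k - cos θ)⁻¹ := by
        convert hper.intervalIntegral_add_eq (-π) 0 using 2 <;> ring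
    _ = 2 * π / w := by
        simp_rw [hkernel]
        rw [intervalIntegral.integral_const_mul,
          integral_poissonKernel_circleMap (abs_lt.mpr ⟨by linarith, hr_lt_one⟩), inv_mul_eq_div]

theorem integral_sin_sq_div_sub_cos (hk : 1 < k) :
    ∫ θ in -π..π, sin θ ^ 2 / (k - cos θ) = 2 * π * (k - √(k ^ 2 - 1)) := by
  have hdiv (θ : ℝ) : sin θ ^ 2 / (k - cos θ) = k + cos θ - (k ^ 2 - 1) * (k - cos θ)⁻¹ := by
    have := (sub_cos_pos hk θ).ne'
    field_simp
    linear_combination sin_sq_add_cos_sq θ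
  have hinv : IntervalIntegrable (fun θ ↦ (k - cos θ)⁻¹) volume (-π) π :=
    (Continuous.inv₀ (by fun_prop) fun θ ↦ (sub_cos_pos hk θ).ne').intervalIntegrable _ _
  simp_rw [hdiv]
  rw [integral_sub (Continuous.intervalIntegrable (by fun_prop) _ _) (hinv.const_mul _),
    intervalIntegral.integral_add (by simp) (by simp), intervalIntegral.integral_const,
    intervalIntegral.integral_const_mul, integral_cos, integral_inv_sub_cos hk, mul_div_left_comm,
    div_sqrt, sin_neg, sin_pi, smul_eq_mul]
  ring

theorem integral_log_sub_cos_mul_cos (hk : 1 < k) :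
    ∫ θ in -π..π, log (k - cos θ) * cos θ = -(2 * π * (k - √(k ^ 2 - 1))) := by
  have hlog (θ : ℝ) : HasDerivAt (fun x ↦ log (k - cos x)) (sin θ / (k - cos θ)) θ := by
    simpa using ((hasDerivAt_cos θ).const_sub k).log (sub_cos_pos hk θ).ne'
  have hderiv : Continuous fun θ ↦ sin θ / (k - cos θ) :=
    Continuous.div (by fun_prop) (by fun_prop) fun θ ↦ (sub_cos_pos hk θ).ne'
  rw [integral_mul_deriv_eq_deriv_mul (fun θ _ ↦ hlog θ) (fun θ _ ↦ hasDerivAt_sin θ)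
    (hderiv.intervalIntegrable _ _) (continuous_cos.intervalIntegrable _ _),
    ← integral_sin_sq_div_sub_cos hk, sin_neg, sin_pi]
  simp only [neg_zero, mul_zero, sub_zero, zero_sub, div_mul_eq_mul_div, sq]

end LogSubCos

theorem artanhLog_div {x y : ℝ} (hx : x ≠ 0) (hadd : x + y ≠ 0) (hsub : x - y ≠ 0) :
    artanhLog (y / x) = (log (x + y) - log (x - y)) / 2 := by
  rw [artanhLog, one_add_div hx, one_sub_div hx, div_div_div_cancel_right₀ hx,
    log_div hadd hsub]

theorem artanhLog_sin_mul_sin_div {k : ℝ} (hk : 1 < k) (α φ : ℝ) :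
    artanhLog (sin α * sin φ / (k - cos α * cos φ)) =
      (log (k - cos (φ + α)) - log (k - cos (φ - α))) / 2 := by
  have hadd : k - cos (φ + α) = k - cos α * cos φ + sin α * sin φ := by rw [cos_add]; ring
  have hsub : k - cos (φ - α) = k - cos α * cos φ - sin α * sin φ := by rw [cos_sub]; ring
  have hadd_pos := sub_cos_pos hk (φ + α)
  have hsub_pos := sub_cos_pos hk (φ - α)
  rw [hadd] at hadd_pos ⊢
  rw [hsub] at hsub_pos ⊢
  exact artanhLog_div (by linarith) hadd_pos.ne' hsub_pos.ne'

theorem integral_artanhLog_mul_sin {k : ℝ} (hk : 1 < k) (α : ℝ) :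
    ∫ φ in 0..π, artanhLog (sin α * sin φ / (k - cos α * cos φ)) * sin φ =
      π * sin α * (k - √(k ^ 2 - 1)) := by
  have heven : Function.Even fun θ ↦ log (k - cos θ) := fun θ ↦ by simp only [cos_neg]
  have hper : Periodic (fun θ ↦ log (k - cos θ)) (2 * π) := fun θ ↦ by simp only [cos_add_two_pi]
  have hint := (continuous_log_sub_cos hk).intervalIntegrable (μ := volume)
  simp_rw [artanhLog_sin_mul_sin_div hk, div_mul_eq_mul_div]
  rw [intervalIntegral.integral_div,
    integral_translate_sub_translate_mul heven sin_neg hint continuous_sin,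
    integral_translate_mul_sin_of_even heven hper (hint _ _), integral_log_sub_cos_mul_cos hk]
  ring

theorem hyperbolic_inner_integral_beta_lt_one_general {k β : ℝ} (hβ : |β| < 1) (hk : 1 < k) :
    ∫ φ in 0..π, 2 / √(1 - β ^ 2) * artanhLog (√(1 - β ^ 2) * sin φ / (k - β * cos φ)) * sin φ =
      2 * π * (k - √(k ^ 2 - 1)) := by
  obtain ⟨hβ_gt, hβ_lt⟩ := abs_lt.mp hβ
  have hsqrt : √(1 - β ^ 2) ≠ 0 := (sqrt_pos.mpr (by nlinarith)).ne'
  have h := integral_artanhLog_mul_sin hk (arccos β)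
  rw [sin_arccos, cos_arccos hβ_gt.le hβ_lt.le] at h
  simp_rw [mul_assoc (2 / √(1 - β ^ 2))]
  rw [intervalIntegral.integral_const_mul, h]
  field_simp

/-- Hyperbolic case with `0 < β < 1` (negative effective curvature): for
`β ∈ (0,1)` and `k > 1`,
`∫₀^π (2/√(1−β²))·artanh(√(1−β²) sin φ / (k − β cos φ))·sin φ dφ
  = 2π(k − √(k²−1))`, independently of `β`. -/
theorem hyperbolic_inner_integral_beta_lt_one (k β : ℝ)
    (hβ0 : 0 < β) (hβ1 : β < 1) (hk : 1 < k) :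
    ∫ φ in (0:ℝ)..π,
      (2 / Real.sqrt (1 - β ^ 2)) *
        Real.artanhLog (Real.sqrt (1 - β ^ 2) * Real.sin φ / (k - β * Real.cos φ)) *
        Real.sin φ
      = 2 * π * (k - Real.sqrt (k ^ 2 - 1)) :=
  hyperbolic_inner_integral_beta_lt_one_general (abs_lt.mpr ⟨by linarith, hβ1⟩) hk
end

section
/- For every real number k > 1, the integral ∫₀^π 2·artanh(sin φ / k)·sin φ dφ equals 2π(k − √(k²−1)). -/
open Real intervalIntegral

/-- The real inverse hyperbolic tangent. -/
noncomputable def Real.artanhFn (x : ℝ) : ℝ := Real.log ((1 + x) / (1 - x)) / 2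

/-!
Integration by parts removes the inverse hyperbolic tangent:
`∫₀^π artanh(c sin φ) sin φ dφ = c ∫₀^π cos² φ / (1 - c² sin² φ) dφ`.
Since `1 - c² sin² φ = cos² φ + (1 - c²) sin² φ`, what remains is an integral over an ellipse with
semi-axes `1` and `√(1 - c²)`. It reduces to `∫₀^π dφ / (a² cos² φ + b² sin² φ) = π / (a b)`,
whose integrand is, up to the factor `a b`, the derivative of the polar angle of
`(a cos φ, b sin φ)`.
-/

theorem hasDerivAt_artanhFn {x : ℝ} (hx : x ^ 2 ≠ 1) :
    HasDerivAt artanhFn (1 / (1 - x ^ 2)) x := by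
  have hadd : 1 + x ≠ 0 := fun h ↦ hx (by linear_combination (x - 1) * h)
  have hsub : 1 - x ≠ 0 := fun h ↦ hx (by linear_combination -(x + 1) * h)
  have hsq : 1 - x ^ 2 ≠ 0 := sub_ne_zero.2 hx.symm
  have hquot := ((hasDerivAt_id x).const_add 1).div ((hasDerivAt_id x).const_sub 1) hsub
  refine ((hquot.log (div_ne_zero hadd hsub)).div_const 2).congr_deriv ?_
  simp only [id_eq, Pi.div_apply]
  field_simp
  ring

theorem hasDerivAt_arctan_div {f g : ℝ → ℝ} {f' g' x : ℝ} (hf : HasDerivAt f f' x)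
    (hg : HasDerivAt g g' x) (hx : g x ≠ 0) :
    HasDerivAt (fun y ↦ arctan (f y / g y)) ((f' * g x - f x * g') / (g x ^ 2 + f x ^ 2)) x := by
  have hsum : g x ^ 2 + f x ^ 2 ≠ 0 := by positivity
  refine (hf.div hg hx).arctan.congr_deriv ?_
  simp only [Pi.div_apply]
  field_simp

section Ellipse

variable {a b : ℝ}

/-- The polar angle of the point `(a cos φ, b sin φ)` of an ellipse with positive semi-axes, as a
continuous function of `φ ∈ ℝ`. It is encoded as a correction to `φ`, since
`tan (φ - θ) = (a - b) sin φ cos φ / (a cos² φ + b sin² φ)` has no poles, unlike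
`tan θ = b sin φ / (a cos φ)`. -/
noncomputable def ellipsePolarAngle (a b φ : ℝ) : ℝ :=
  φ - arctan ((a - b) * (sin φ * cos φ) / (a * cos φ ^ 2 + b * sin φ ^ 2))

theorem mul_cos_sq_add_mul_sin_sq_pos (ha : 0 < a) (hb : 0 < b) (φ : ℝ) :
    0 < a * cos φ ^ 2 + b * sin φ ^ 2 := by
  rcases eq_or_ne (sin φ) 0 with hs | hs
  · have hc : cos φ ^ 2 = 1 := by simpa [hs] using sin_sq_add_cos_sq φ
    simpa [hs, hc] using ha
  · positivity

theorem hasDerivAt_ellipsePolarAngle (ha : 0 < a) (hb : 0 < b) (φ : ℝ) :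
    HasDerivAt (ellipsePolarAngle a b)
      (a * b * (a ^ 2 * cos φ ^ 2 + b ^ 2 * sin φ ^ 2)⁻¹) φ := by
  have hnum : HasDerivAt (fun y ↦ (a - b) * (sin y * cos y))
      ((a - b) * (cos φ ^ 2 - sin φ ^ 2)) φ :=
    (((hasDerivAt_sin φ).mul (hasDerivAt_cos φ)).const_mul (a - b)).congr_deriv (by ring)
  have hden : HasDerivAt (fun y ↦ a * cos y ^ 2 + b * sin y ^ 2)
      (-2 * (a - b) * (sin φ * cos φ)) φ :=
    ((((hasDerivAt_cos φ).pow 2).const_mul a).add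
      (((hasDerivAt_sin φ).pow 2).const_mul b)).congr_deriv (by push_cast; ring)
  have hquad := (mul_cos_sq_add_mul_sin_sq_pos (pow_pos ha 2) (pow_pos hb 2) φ).ne'
  have hnorm : (a * cos φ ^ 2 + b * sin φ ^ 2) ^ 2 + ((a - b) * (sin φ * cos φ)) ^ 2
      = a ^ 2 * cos φ ^ 2 + b ^ 2 * sin φ ^ 2 := by
    linear_combination (a ^ 2 * cos φ ^ 2 + b ^ 2 * sin φ ^ 2) * sin_sq_add_cos_sq φ
  refine ((hasDerivAt_id φ).sub (hasDerivAt_arctan_div hnum hden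
    (mul_cos_sq_add_mul_sin_sq_pos ha hb φ).ne')).congr_deriv ?_
  rw [hnorm, ← div_eq_mul_inv, eq_div_iff hquad, sub_mul, div_mul_cancel₀ _ hquad]
  linear_combination
    (a * b - (a - b) * (a * cos φ ^ 2 - b * sin φ ^ 2)) * sin_sq_add_cos_sq φ

theorem intervalIntegrable_inv_mul_cos_sq_add_mul_sin_sq (ha : 0 < a) (hb : 0 < b) (x y : ℝ) :
    IntervalIntegrable (fun φ ↦ (a ^ 2 * cos φ ^ 2 + b ^ 2 * sin φ ^ 2)⁻¹)
      MeasureTheory.volume x y :=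
  (Continuous.inv₀ (by fun_prop) fun φ ↦
    (mul_cos_sq_add_mul_sin_sq_pos (pow_pos ha 2) (pow_pos hb 2) φ).ne').intervalIntegrable x y

theorem integral_inv_mul_cos_sq_add_mul_sin_sq (ha : 0 < a) (hb : 0 < b) :
    ∫ φ in (0 : ℝ)..π, (a ^ 2 * cos φ ^ 2 + b ^ 2 * sin φ ^ 2)⁻¹ = π / (a * b) := by
  have hangle : ∫ φ in (0 : ℝ)..π, a * b * (a ^ 2 * cos φ ^ 2 + b ^ 2 * sin φ ^ 2)⁻¹ = π := by
    rw [integral_eq_sub_of_hasDerivAt (fun φ _ ↦ hasDerivAt_ellipsePolarAngle ha hb φ)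
      ((intervalIntegrable_inv_mul_cos_sq_add_mul_sin_sq ha hb 0 π).const_mul (a * b))]
    simp [ellipsePolarAngle]
  rwa [integral_const_mul, mul_comm, ← eq_div_iff (mul_pos ha hb).ne'] at hangle

theorem integral_cos_sq_div_mul_cos_sq_add_mul_sin_sq (ha : 0 < a) (hb : 0 < b) :
    ∫ φ in (0 : ℝ)..π, cos φ ^ 2 / (a ^ 2 * cos φ ^ 2 + b ^ 2 * sin φ ^ 2)
      = π / (a * (a + b)) := by
  rcases eq_or_ne a b with rfl | hab
  · simp_rw [← mul_add, cos_sq_add_sin_sq, integral_div, integral_cos_sq]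
    simp only [sin_pi, sin_zero]
    field_simp
    ring
  have hsub : a - b ≠ 0 := sub_ne_zero.2 hab
  have hsplit (φ : ℝ) : cos φ ^ 2 / (a ^ 2 * cos φ ^ 2 + b ^ 2 * sin φ ^ 2)
      = (1 - b ^ 2 * (a ^ 2 * cos φ ^ 2 + b ^ 2 * sin φ ^ 2)⁻¹) / ((a - b) * (a + b)) := by
    have hquad := (mul_cos_sq_add_mul_sin_sq_pos (pow_pos ha 2) (pow_pos hb 2) φ).ne'
    rw [eq_div_iff (mul_ne_zero hsub (add_pos ha hb).ne'), div_mul_eq_mul_div, div_eq_iff hquad]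
    linear_combination b ^ 2 * inv_mul_cancel₀ hquad - b ^ 2 * sin_sq_add_cos_sq φ
  simp_rw [hsplit]
  rw [integral_div, integral_sub intervalIntegrable_const
    ((intervalIntegrable_inv_mul_cos_sq_add_mul_sin_sq ha hb 0 π).const_mul _), integral_const_mul,
    integral_inv_mul_cos_sq_add_mul_sin_sq ha hb, integral_const]
  simp only [smul_eq_mul]
  field_simp
  ring

end Ellipse

section Artanh

variable {c : ℝ}

theorem integral_artanhFn_mul_sin_mul_sin_eq_integral_cos_sq_div (hc : c ^ 2 < 1) :
    ∫ φ in (0 : ℝ)..π, artanhFn (c * sin φ) * sin φ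
      = c * ∫ φ in (0 : ℝ)..π, cos φ ^ 2 / (1 - (c * sin φ) ^ 2) := by
  have hlt (φ : ℝ) : (c * sin φ) ^ 2 < 1 := by
    rw [mul_pow]
    exact (mul_le_of_le_one_right (sq_nonneg c) (sin_sq_le_one φ)).trans_lt hc
  have hartanh (φ : ℝ) : HasDerivAt (fun y ↦ artanhFn (c * sin y))
      (1 / (1 - (c * sin φ) ^ 2) * (c * cos φ)) φ :=
    (hasDerivAt_artanhFn (hlt φ).ne).comp (h := fun y ↦ c * sin y) φ
      ((hasDerivAt_sin φ).const_mul c)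
  have hcos (φ : ℝ) : HasDerivAt (fun y ↦ -cos y) (sin φ) φ := by
    simpa only [neg_neg] using (hasDerivAt_cos φ).fun_neg
  have hint : Continuous fun φ ↦ 1 / (1 - (c * sin φ) ^ 2) * (c * cos φ) :=
    (Continuous.div (by fun_prop) (by fun_prop) fun φ ↦ (sub_pos.2 (hlt φ)).ne').mul (by fun_prop)
  rw [integral_mul_deriv_eq_deriv_mul (fun φ _ ↦ hartanh φ) (fun φ _ ↦ hcos φ)
    (hint.intervalIntegrable 0 π) (continuous_sin.intervalIntegrable 0 π), ← integral_const_mul]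
  have hboundary : artanhFn 0 = 0 := by simp [artanhFn]
  simp only [sin_pi, sin_zero, mul_zero, hboundary, zero_mul, sub_self, zero_sub,
    ← intervalIntegral.integral_neg]
  congr 1 with φ
  ring

theorem integral_artanhFn_mul_sin_mul_sin (hc : c ^ 2 < 1) :
    ∫ φ in (0 : ℝ)..π, artanhFn (c * sin φ) * sin φ = π * c / (1 + √(1 - c ^ 2)) := by
  have hpos : 0 < 1 - c ^ 2 := sub_pos.2 hc
  have hellipse (φ : ℝ) :
      1 - (c * sin φ) ^ 2 = 1 ^ 2 * cos φ ^ 2 + √(1 - c ^ 2) ^ 2 * sin φ ^ 2 := by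
    rw [sq_sqrt hpos.le]
    linear_combination -sin_sq_add_cos_sq φ
  simp_rw [integral_artanhFn_mul_sin_mul_sin_eq_integral_cos_sq_div hc, hellipse,
    integral_cos_sq_div_mul_cos_sq_add_mul_sin_sq one_pos (sqrt_pos.2 hpos)]
  ring

end Artanh

/-- For `k > 1`, `∫₀^π 2·artanh(sin φ / k)·sin φ dφ = 2π(k − √(k²−1))`. -/
theorem hyperbolic_inner_integral_beta_zero (k : ℝ) (hk : 1 < k) :
    ∫ φ in (0:ℝ)..π, 2 * Real.artanhFn (Real.sin φ / k) * Real.sin φ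
      = 2 * π * (k - Real.sqrt (k ^ 2 - 1)) := by
  have hk₀ : 0 < k := one_pos.trans hk
  have hinv : k⁻¹ ^ 2 < 1 :=
    pow_lt_one₀ (inv_nonneg.2 hk₀.le) (inv_lt_one_of_one_lt₀ hk) two_ne_zero
  have hsqrt : √(1 - k⁻¹ ^ 2) = √(k ^ 2 - 1) / k := by
    rw [show 1 - k⁻¹ ^ 2 = (k ^ 2 - 1) / k ^ 2 by field_simp, sqrt_div' _ (sq_nonneg k),
      sqrt_sq hk₀.le]
  have hsq : √(k ^ 2 - 1) ^ 2 = k ^ 2 - 1 := sq_sqrt (by nlinarith)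
  simp_rw [div_eq_inv_mul, mul_assoc, integral_const_mul]
  rw [integral_artanhFn_mul_sin_mul_sin hinv, hsqrt]
  field_simp
  linear_combination hsq
end
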